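/- Let a > 0 and A, B > 0. For γ ∈ ℝ and σ_f > 0, with s := 1/σ_f², define R(γ, σ_f) := σ_f² · [[2, (a(1+γ)+s)/(a+s)], [(a(1+γ)+s)/(a+s), 2(a(1−γ+γ²)+s)/(a+s)]], Δ := diag(A, B), and T(γ, σ_f) := trace((Δ + R(γ, σ_f)⁻¹)⁻¹). Then for every fixed γ ∈ ℝ, lim_{σ_f → 0⁺} (T(γ, σ_f) − T(1/2, σ_f)) / σ_f⁴ = 2a·(γ − 1/2)². (This makes precise the paper's claim that when σ_f → 0 the Cramér–Rao bound is minimized at γ = 1/2: to leading order in σ_f, the excess summed CRB is a positive multiple of (γ − 1/2)².) -/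

import Mathlib

open Matrix Filter

/-!
For invertible `R` one has `(Δ + R⁻¹)⁻¹ = (1 + R * Δ)⁻¹ * R = R * (1 + Δ * R)⁻¹`, so two such
bounds differ by `(1 + R₁ * Δ)⁻¹ * (R₁ - R₂) * (1 + Δ * R₂)⁻¹`. As the priors shrink to `0` the
outer factors tend to `1`: to leading order the data term `Δ` drops out and the bounds differ by
`R₁ - R₂`. For the relay prior, `R γ σ = σ² • (!![2, 1; 1, 2] + (σ² / (1 + a * σ²)) • N γ)` with
`trace (N γ) = 2 * a * (γ ^ 2 - γ)`, so the `σ²` terms cancel in the difference and the `σ⁴`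
coefficient has trace `2 * a * ((γ₁ - 1 / 2) ^ 2 - (γ₂ - 1 / 2) ^ 2)`.
-/

open scoped Topology

section CramerRaoBound

variable {n 𝕜 : Type*} [Fintype n] [DecidableEq n]

/-- The Bayesian Cramér–Rao bound matrix for data Fisher information `Δ` and prior covariance `R`.
It has this meaning only for invertible `R`, since `R⁻¹ = 0` for singular `R`. -/
noncomputable def crb [CommRing 𝕜] (Δ R : Matrix n n 𝕜) : Matrix n n 𝕜 :=
  (Δ + R⁻¹)⁻¹

section Algebra

variable [CommRing 𝕜] {Δ R R₁ R₂ : Matrix n n 𝕜}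

theorem crb_eq_inv_mul (hR : IsUnit R.det) : crb Δ R = (1 + R * Δ)⁻¹ * R := by
  have hfactor : Δ + R⁻¹ = R⁻¹ * (1 + R * Δ) := by
    rw [mul_add, mul_one, nonsing_inv_mul_cancel_left _ _ hR, add_comm]
  rw [crb, hfactor, Matrix.mul_inv_rev, nonsing_inv_nonsing_inv _ hR]

theorem crb_eq_mul_inv (hR : IsUnit R.det) : crb Δ R = R * (1 + Δ * R)⁻¹ := by
  have hfactor : Δ + R⁻¹ = (1 + Δ * R) * R⁻¹ := by
    rw [add_mul, one_mul, mul_nonsing_inv_cancel_right _ _ hR, add_comm]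
  rw [crb, hfactor, Matrix.mul_inv_rev, nonsing_inv_nonsing_inv _ hR]

theorem crb_sub_crb (hR₁ : IsUnit R₁.det) (hR₂ : IsUnit R₂.det)
    (h₁ : IsUnit (1 + R₁ * Δ).det) (h₂ : IsUnit (1 + Δ * R₂).det) :
    crb Δ R₁ - crb Δ R₂ = (1 + R₁ * Δ)⁻¹ * (R₁ - R₂) * (1 + Δ * R₂)⁻¹ := by
  have hmid : R₁ - R₂ = R₁ * (1 + Δ * R₂) - (1 + R₁ * Δ) * R₂ := by noncomm_ring
  rw [crb_eq_inv_mul hR₁, crb_eq_mul_inv hR₂, hmid, mul_sub, sub_mul, ← mul_assoc,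
    mul_nonsing_inv_cancel_right _ _ h₂, nonsing_inv_mul_cancel_left _ _ h₁]

end Algebra

section Limit

variable [Field 𝕜] [TopologicalSpace 𝕜] [IsTopologicalRing 𝕜]
  {ι : Type*} {l : Filter ι}

theorem eventually_isUnit_det_of_tendsto [T1Space 𝕜] {M : ι → Matrix n n 𝕜} {M₀ : Matrix n n 𝕜}
    (hM : Tendsto M l (𝓝 M₀)) (hM₀ : M₀.det ≠ 0) : ∀ᶠ i in l, IsUnit (M i).det := by
  have hdet : Tendsto (fun i => (M i).det) l (𝓝 M₀.det) :=
    (continuous_id.matrix_det.tendsto M₀).comp hM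
  exact (hdet.eventually_ne hM₀).mono fun _ => Ne.isUnit

variable [ContinuousInv₀ 𝕜]

theorem tendsto_matrix_inv_of_tendsto_one {M : ι → Matrix n n 𝕜} (hM : Tendsto M l (𝓝 1)) :
    Tendsto (fun i => (M i)⁻¹) l (𝓝 1) := by
  have hinv : ContinuousAt Inv.inv (1 : Matrix n n 𝕜) := by
    refine continuousAt_matrix_inv 1 ?_
    rw [Ring.inverse_eq_inv', det_one]
    exact continuousAt_inv₀ one_ne_zero
  have hlim := hinv.tendsto.comp hM
  rwa [inv_one] at hlim

theorem tendsto_smul_crb_sub_crb [T1Space 𝕜] (Δ : Matrix n n 𝕜) {R₁ R₂ : ι → Matrix n n 𝕜}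
    {w : ι → 𝕜} {K : Matrix n n 𝕜} (hR₁ : Tendsto R₁ l (𝓝 0)) (hR₂ : Tendsto R₂ l (𝓝 0))
    (hu₁ : ∀ᶠ i in l, IsUnit (R₁ i).det) (hu₂ : ∀ᶠ i in l, IsUnit (R₂ i).det)
    (hK : Tendsto (fun i => w i • (R₁ i - R₂ i)) l (𝓝 K)) :
    Tendsto (fun i => w i • (crb Δ (R₁ i) - crb Δ (R₂ i))) l (𝓝 K) := by
  have h₁ : Tendsto (fun i => 1 + R₁ i * Δ) l (𝓝 1) := by
    simpa using (hR₁.mul_const Δ).const_add 1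
  have h₂ : Tendsto (fun i => 1 + Δ * R₂ i) l (𝓝 1) := by
    simpa using (hR₂.const_mul Δ).const_add 1
  have hlim : Tendsto (fun i => (1 + R₁ i * Δ)⁻¹ * (w i • (R₁ i - R₂ i)) * (1 + Δ * R₂ i)⁻¹)
      l (𝓝 K) := by
    simpa using ((tendsto_matrix_inv_of_tendsto_one h₁).mul hK).mul
      (tendsto_matrix_inv_of_tendsto_one h₂)
  have hdet_one : (1 : Matrix n n 𝕜).det ≠ 0 := by simp
  refine hlim.congr' ?_
  filter_upwards [hu₁, hu₂, eventually_isUnit_det_of_tendsto h₁ hdet_one,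
    eventually_isUnit_det_of_tendsto h₂ hdet_one] with i hi₁ hi₂ hi₃ hi₄
  rw [crb_sub_crb hi₁ hi₂ hi₃ hi₄, mul_smul_comm, smul_mul_assoc]

end Limit

end CramerRaoBound

section RelayPrior

/-- The prior covariance `R(γ, σ_f)` of the frequency pair `(f_sd, f_rd)`, with `s = 1 / σ_f²`
substituted. -/
noncomputable def relayPriorCov (a γ σ : ℝ) : Matrix (Fin 2) (Fin 2) ℝ :=
  σ ^ 2 •
    !![2, (a * (1 + γ) + 1 / σ ^ 2) / (a + 1 / σ ^ 2);
       (a * (1 + γ) + 1 / σ ^ 2) / (a + 1 / σ ^ 2),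
       2 * (a * (1 - γ + γ ^ 2) + 1 / σ ^ 2) / (a + 1 / σ ^ 2)]

/-- The coefficient of `σ⁴` in the expansion of `relayPriorCov a γ σ` at `σ = 0`: the leading term
that depends on `γ`. -/
def relayPriorCoeff (a γ : ℝ) : Matrix (Fin 2) (Fin 2) ℝ :=
  !![0, a * γ; a * γ, 2 * a * (γ ^ 2 - γ)]

theorem trace_relayPriorCoeff_sub (a γ₁ γ₂ : ℝ) :
    (relayPriorCoeff a γ₁ - relayPriorCoeff a γ₂).trace
      = 2 * a * ((γ₁ - 1 / 2) ^ 2 - (γ₂ - 1 / 2) ^ 2) := by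
  simp only [relayPriorCoeff, trace_sub, trace_fin_two_of]
  ring

theorem relayPriorCov_eq {a σ : ℝ} (γ : ℝ) (hσ : σ ≠ 0) (hden : 1 + a * σ ^ 2 ≠ 0) :
    relayPriorCov a γ σ =
      σ ^ 2 • (!![2, 1; 1, 2] + (σ ^ 2 / (1 + a * σ ^ 2)) • relayPriorCoeff a γ) := by
  have hs : a + 1 / σ ^ 2 = (1 + a * σ ^ 2) / σ ^ 2 := by field_simp; ring
  have hoff : (a * (1 + γ) + 1 / σ ^ 2) / (a + 1 / σ ^ 2)
      = 1 + σ ^ 2 / (1 + a * σ ^ 2) * (a * γ) := by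
    rw [hs]; field_simp; ring
  have hdiag : 2 * (a * (1 - γ + γ ^ 2) + 1 / σ ^ 2) / (a + 1 / σ ^ 2)
      = 2 + σ ^ 2 / (1 + a * σ ^ 2) * (2 * a * (γ ^ 2 - γ)) := by
    rw [hs]; field_simp; ring
  rw [relayPriorCov, relayPriorCoeff, hoff, hdiag]
  simp only [smul_of, smul_cons, smul_empty, smul_eq_mul, of_add_of, add_cons, head_cons, tail_cons,
    empty_add_empty, mul_zero, add_zero]

theorem tendsto_one_add_mul_sq (a : ℝ) :
    Tendsto (fun σ : ℝ => 1 + a * σ ^ 2) (𝓝[≠] 0) (𝓝 1) := by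
  have hcont : Continuous fun σ : ℝ => 1 + a * σ ^ 2 := by fun_prop
  simpa using (hcont.tendsto 0).mono_left nhdsWithin_le_nhds

theorem tendsto_sq_nhdsNE_zero : Tendsto (fun σ : ℝ => σ ^ 2) (𝓝[≠] 0) (𝓝 0) := by
  simpa using ((continuous_pow 2).tendsto (0 : ℝ)).mono_left nhdsWithin_le_nhds

theorem eventually_relayPriorCov_eq (a γ : ℝ) :
    ∀ᶠ σ in 𝓝[≠] 0, relayPriorCov a γ σ =
      σ ^ 2 • (!![2, 1; 1, 2] + (σ ^ 2 / (1 + a * σ ^ 2)) • relayPriorCoeff a γ) := by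
  filter_upwards [self_mem_nhdsWithin, (tendsto_one_add_mul_sq a).eventually_ne one_ne_zero]
    with σ hσ hden using relayPriorCov_eq γ hσ hden

theorem tendsto_relayPriorCov_factor (a γ : ℝ) :
    Tendsto (fun σ : ℝ => !![2, 1; 1, 2] + (σ ^ 2 / (1 + a * σ ^ 2)) • relayPriorCoeff a γ)
      (𝓝[≠] 0) (𝓝 !![2, 1; 1, 2]) := by
  simpa using ((tendsto_sq_nhdsNE_zero.div (tendsto_one_add_mul_sq a) one_ne_zero).smul_const
    (relayPriorCoeff a γ)).const_add !![2, 1; 1, 2]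

theorem tendsto_relayPriorCov (a γ : ℝ) : Tendsto (relayPriorCov a γ) (𝓝[≠] 0) (𝓝 0) := by
  have hlim := tendsto_sq_nhdsNE_zero.smul (tendsto_relayPriorCov_factor a γ)
  rw [zero_smul] at hlim
  exact hlim.congr' ((eventually_relayPriorCov_eq a γ).mono fun _ => Eq.symm)

theorem eventually_isUnit_det_relayPriorCov (a γ : ℝ) :
    ∀ᶠ σ in 𝓝[≠] 0, IsUnit (relayPriorCov a γ σ).det := by
  have hdet : (!![2, 1; 1, 2] : Matrix (Fin 2) (Fin 2) ℝ).det ≠ 0 := by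
    norm_num [det_fin_two_of]
  filter_upwards [self_mem_nhdsWithin, eventually_relayPriorCov_eq a γ,
    eventually_isUnit_det_of_tendsto (tendsto_relayPriorCov_factor a γ) hdet] with σ hσ hcov hunit
  rw [hcov, det_smul]
  exact ((pow_ne_zero 2 hσ).isUnit.pow _).mul hunit

theorem tendsto_inv_smul_relayPriorCov_sub (a γ₁ γ₂ : ℝ) :
    Tendsto (fun σ => (σ ^ 4)⁻¹ • (relayPriorCov a γ₁ σ - relayPriorCov a γ₂ σ))
      (𝓝[≠] 0) (𝓝 (relayPriorCoeff a γ₁ - relayPriorCoeff a γ₂)) := by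
  have hlim := ((tendsto_one_add_mul_sq a).inv₀ one_ne_zero).smul_const
    (relayPriorCoeff a γ₁ - relayPriorCoeff a γ₂)
  rw [inv_one, one_smul] at hlim
  refine hlim.congr' ?_
  filter_upwards [self_mem_nhdsWithin, eventually_relayPriorCov_eq a γ₁,
    eventually_relayPriorCov_eq a γ₂] with σ hσ h₁ h₂
  have hσ₀ : σ ≠ 0 := hσ
  have hscalar : (σ ^ 4)⁻¹ * σ ^ 2 * (σ ^ 2 / (1 + a * σ ^ 2)) = (1 + a * σ ^ 2)⁻¹ := by
    field_simp
  rw [h₁, h₂, ← smul_sub, add_sub_add_left_eq_sub, ← smul_sub, smul_smul, smul_smul, hscalar]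

end RelayPrior

theorem gamma_half_optimal_small_sigma_general (a γ₁ γ₂ : ℝ) (Δ : Matrix (Fin 2) (Fin 2) ℝ) :
    Tendsto (fun σ => ((crb Δ (relayPriorCov a γ₁ σ)).trace
        - (crb Δ (relayPriorCov a γ₂ σ)).trace) / σ ^ 4)
      (𝓝[≠] 0) (𝓝 (2 * a * ((γ₁ - 1 / 2) ^ 2 - (γ₂ - 1 / 2) ^ 2))) := by
  have hcrb := tendsto_smul_crb_sub_crb Δ
    (tendsto_relayPriorCov a γ₁) (tendsto_relayPriorCov a γ₂)
    (eventually_isUnit_det_relayPriorCov a γ₁) (eventually_isUnit_det_relayPriorCov a γ₂)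
    (tendsto_inv_smul_relayPriorCov_sub a γ₁ γ₂)
  have htrace := (continuous_id.matrix_trace.tendsto _).comp hcrb
  rw [id_eq, trace_relayPriorCoeff_sub] at htrace
  simpa only [Function.comp_def, id_eq, trace_smul, trace_sub, smul_eq_mul, ← div_eq_inv_mul]
    using htrace

/-- In the strong-prior limit `σ_f → 0⁺`, the excess summed CRB satisfies
`(T(γ, σ_f) − T(1/2, σ_f))/σ_f⁴ → 2a(γ − 1/2)²`, so `γ = 1/2` minimizes the CRB to
leading order. -/
theorem gamma_half_optimal_small_sigma (a A B : ℝ) (ha : 0 < a) (hA : 0 < A) (hB : 0 < B)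
    (s : ℝ → ℝ) (hs : ∀ σf, s σf = 1 / σf ^ 2)
    (R : ℝ → ℝ → Matrix (Fin 2) (Fin 2) ℝ)
    (hR : ∀ γ σf, R γ σf = σf ^ 2 •
      !![2, (a * (1 + γ) + s σf) / (a + s σf);
         (a * (1 + γ) + s σf) / (a + s σf), 2 * (a * (1 - γ + γ ^ 2) + s σf) / (a + s σf)])
    (Δ : Matrix (Fin 2) (Fin 2) ℝ) (hΔ : Δ = !![A, 0; 0, B])
    (T : ℝ → ℝ → ℝ) (hT : ∀ γ σf, T γ σf = ((Δ + (R γ σf)⁻¹)⁻¹).trace) :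
    ∀ γ : ℝ,
      Tendsto (fun σf => (T γ σf - T (1 / 2) σf) / σf ^ 4)
        (nhdsWithin 0 (Set.Ioi 0)) (nhds (2 * a * (γ - 1 / 2) ^ 2)) := by
  intro γ
  simpa [hT, hR, hs, crb, relayPriorCov] using
    (gamma_half_optimal_small_sigma_general a γ (1 / 2) Δ).mono_left (nhdsGT_le_nhdsNE 0)
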